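/- Fix ρ ∈ (0,1) and α ∈ (0,1). Let (α_n) be a sequence in (0,1) with n·α_n → α, let c_n be defined by Φ(−c_n) = α_n, and for n ≥ 2 let z₀(n) be the unique real number with Φ(−d(ρ, c_n, z₀(n))) = 1/n. Then ∫_{−∞}^{z₀(n)} n·(n·Φ(−d) − 1)·Φ(d)^{n−2}·φ(d)·d·G(ρ,c_n,z)²·φ(z) dz → 0 as n → ∞, where d = d(ρ,c_n,z) and G(ρ,c,z) = (c + z/√ρ)/(2(1−ρ)^{3/2}). -/

import Mathlib

open MeasureTheory Filter

/-- The standard normal density. -/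
noncomputable def phi (x : ℝ) : ℝ := (Real.sqrt (2 * Real.pi))⁻¹ * Real.exp (-x ^ 2 / 2)

/-- The standard normal cumulative distribution function. -/
noncomputable def Phi (x : ℝ) : ℝ := ∫ t in Set.Iic x, phi t

/-- d(ρ,c,z) = (c + √ρ·z)/√(1−ρ). -/
noncomputable def dd (ρ c z : ℝ) : ℝ := (c + Real.sqrt ρ * z) / Real.sqrt (1 - ρ)

/-- G(ρ,c,z) = (c + z/√ρ)/(2(1−ρ)^{3/2}). -/
noncomputable def G (ρ c z : ℝ) : ℝ :=
  (c + z / Real.sqrt ρ) / (2 * (1 - ρ) ^ ((3 : ℝ) / 2))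

/-- H_n(ρ,c) = ∫ Φ(d(ρ,c,z))^n φ(z) dz. -/
noncomputable def Hn (n : ℕ) (ρ c : ℝ) : ℝ := ∫ z : ℝ, (Phi (dd ρ c z)) ^ n * phi z

/-!
Put `p = Φ(-d)`, `t = np`. The Mills-type bound `φ(d) ≤ C (1 + |d|) p` turns the `n`-dependent
factor of the integrand into at most `C' (1 + |d|) (1 + t) t e^{-t}`, which is bounded uniformly in
`n`. Gaussian tails decay superexponentially, so `Φ(-c_n) = O(1/n) = O(Φ(-d(z₀)))` forces
`d(z₀) ≤ λ c_n` for every `λ > 1`; as `√(1 - ρ) < 1`, this gives `κ c_n ≤ -z₀` for some `κ > 0`.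
Hence `z₀ → -∞`, and for `z ≤ z₀` both `d` and `G` are `O(|z|)`: the integrand is `O(z⁴ φ(z))` and
its integral is dominated by the tail of a convergent one.
-/

open Asymptotics ProbabilityTheory Set
open scoped Topology

theorem tendsto_setIntegral_Iic_of_norm_le {ι E : Type*} {l : Filter ι} [l.IsCountablyGenerated]
    [NormedAddCommGroup E] [NormedSpace ℝ E] {μ : Measure ℝ} {f : ι → ℝ → E} {g : ℝ → ℝ}
    {a : ι → ℝ} (hg : Integrable g μ) (ha : Tendsto a l atBot)
    (hfg : ∀ᶠ i in l, ∀ x ≤ a i, ‖f i x‖ ≤ g x) :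
    Tendsto (fun i ↦ ∫ x in Iic (a i), f i x ∂μ) l (𝓝 0) := by
  refine squeeze_zero_norm' ?_ (tendsto_integral_Iic_zero (μ := μ) (f := g) ha)
  filter_upwards [hfg] with i hi
  exact norm_integral_le_of_norm_le hg.integrableOn <|
    (ae_restrict_iff' measurableSet_Iic).2 (.of_forall hi)

theorem abs_mul_add_mul_le {κ c z : ℝ} (a b : ℝ) (hκ : 0 < κ) (h : κ * |c| ≤ |z|) :
    |a * c + b * z| ≤ (|a| / κ + |b|) * |z| := by
  have hc : |c| ≤ |z| / κ := (le_div_iff₀' hκ).2 h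
  calc |a * c + b * z| ≤ |a| * |c| + |b| * |z| := by
        simpa only [abs_mul] using abs_add_le (a * c) (b * z)
    _ ≤ |a| * (|z| / κ) + |b| * |z| := by gcongr
    _ = (|a| / κ + |b|) * |z| := by ring

theorem one_sub_pow_sub_le_exp {p : ℝ} (hp : p ∈ Icc 0 1) (n k : ℕ) :
    (1 - p) ^ (n - k) ≤ Real.exp (k - n * p) := by
  have hcast : (n : ℝ) - k ≤ (n - k : ℕ) := by
    rw [sub_le_iff_le_add]
    exact_mod_cast le_tsub_add
  calc (1 - p) ^ (n - k) ≤ Real.exp (-p) ^ (n - k) :=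
        pow_le_pow_left₀ (sub_nonneg.2 hp.2) (Real.one_sub_le_exp_neg p) _
    _ = Real.exp ((n - k : ℕ) * -p) := (Real.exp_nat_mul _ _).symm
    _ ≤ Real.exp (k - n * p) := by
        gcongr
        nlinarith [hp.1, hp.2, (n - k : ℕ).cast_nonneg (α := ℝ), k.cast_nonneg (α := ℝ)]

theorem add_one_mul_self_mul_exp_neg_le {t : ℝ} (ht : 0 ≤ t) :
    (t + 1) * t * Real.exp (-t) ≤ 2 := by
  rw [Real.exp_neg, ← div_eq_mul_inv, div_le_iff₀ (Real.exp_pos t)]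
  nlinarith [Real.quadratic_le_exp_of_nonneg ht]

theorem abs_mul_one_sub_pow_mul_self_le {p : ℝ} (hp : p ∈ Icc 0 1) (n : ℕ) :
    |(n : ℝ) * (n * p - 1) * (1 - p) ^ (n - 2)| * p ≤ 2 * Real.exp 2 := by
  have hp₀ : 0 ≤ p := hp.1
  have hq : 0 ≤ 1 - p := sub_nonneg.2 hp.2
  have ht : 0 ≤ n * p := by positivity
  have habs : |n * p - 1| ≤ n * p + 1 := by
    rw [abs_le]
    constructor <;> linarith
  rw [abs_mul, abs_mul, abs_of_nonneg (pow_nonneg hq _), Nat.abs_cast]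
  calc n * |n * p - 1| * (1 - p) ^ (n - 2) * p
      ≤ n * (n * p + 1) * Real.exp (2 - n * p) * p := by
        gcongr
        exact one_sub_pow_sub_le_exp hp n 2
    _ = (n * p + 1) * (n * p) * Real.exp (-(n * p)) * Real.exp 2 := by
        rw [sub_eq_add_neg, Real.exp_add]
        ring
    _ ≤ 2 * Real.exp 2 := by
        gcongr
        exact add_one_mul_self_mul_exp_neg_le ht

theorem phi_eq_gaussianPDFReal : phi = gaussianPDFReal 0 1 := by
  ext x
  simp [phi, gaussianPDFReal]

theorem phi_pos (x : ℝ) : 0 < phi x := by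
  rw [phi_eq_gaussianPDFReal]
  exact gaussianPDFReal_pos 0 1 x one_ne_zero

theorem phi_neg (x : ℝ) : phi (-x) = phi x := by
  simp [phi]

theorem phi_sub (x a : ℝ) : phi (x - a) = phi x * Real.exp (a * x - a ^ 2 / 2) := by
  rw [phi, phi, mul_assoc, ← Real.exp_add]
  ring_nf

theorem integrable_phi : Integrable phi := by
  rw [phi_eq_gaussianPDFReal]
  exact integrable_gaussianPDFReal 0 1

theorem integral_phi : ∫ x, phi x = 1 := by
  rw [phi_eq_gaussianPDFReal]
  exact integral_gaussianPDFReal_eq_one 0 one_ne_zero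

theorem integrable_pow_mul_phi (k : ℕ) : Integrable fun x ↦ x ^ k * phi x := by
  have h := integrable_rpow_mul_exp_neg_mul_sq (b := 1 / 2) one_half_pos (s := k)
    (neg_one_lt_zero.trans_le k.cast_nonneg)
  refine (h.const_mul (Real.sqrt (2 * Real.pi))⁻¹).congr (.of_forall fun x ↦ ?_)
  simp only [phi, Real.rpow_natCast]
  ring_nf

theorem Phi_nonneg (x : ℝ) : 0 ≤ Phi x :=
  integral_nonneg fun t ↦ (phi_pos t).le

theorem monotone_Phi : Monotone Phi := fun _ _ h ↦
  setIntegral_mono_set integrable_phi.integrableOn (.of_forall fun t ↦ (phi_pos t).le)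
    (Iic_subset_Iic.2 h).eventuallyLE

theorem Phi_add_Phi_neg (x : ℝ) : Phi x + Phi (-x) = 1 := by
  have hneg : Phi (-x) = ∫ t in Ioi x, phi t := by
    simpa only [Phi, phi_neg, neg_neg] using integral_comp_neg_Iic (-x) phi
  rw [hneg, Phi, ← integral_phi]
  exact intervalIntegral.integral_Iic_add_Ioi integrable_phi.integrableOn
    integrable_phi.integrableOn

theorem Phi_mem_Icc (x : ℝ) : Phi x ∈ Icc 0 1 :=
  ⟨Phi_nonneg x, by linarith [Phi_add_Phi_neg x, Phi_nonneg (-x)]⟩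

theorem exp_neg_mul_phi_le_phi_sub {x a : ℝ} (ha : 0 ≤ a) (hax : a * (1 + |x|) ≤ 1) :
    Real.exp (-(3 / 2)) * phi x ≤ phi (x - a) := by
  have hx := neg_abs_le x
  have hx' := abs_nonneg x
  rw [phi_sub, mul_comm]
  gcongr
  · exact (phi_pos x).le
  · nlinarith

theorem phi_le_mul_Phi (x : ℝ) : phi x ≤ Real.exp (3 / 2) * (1 + |x|) * Phi x := by
  -- On an interval of length `1 / (1 + |x|)` left of `x`, `phi` drops by a bounded factor.
  set δ := (1 + |x|)⁻¹ with hδ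
  have hx : 0 < 1 + |x| := by positivity
  have hδ₀ : 0 ≤ δ := by positivity
  have hpoint : ∀ t ∈ Ioc (x - δ) x, Real.exp (-(3 / 2)) * phi x ≤ phi t := fun t ht ↦ by
    have hth : (x - t) * (1 + |x|) ≤ 1 := by
      rw [← le_div_iff₀ hx, one_div]
      linarith [ht.1]
    simpa only [sub_sub_cancel] using exp_neg_mul_phi_le_phi_sub (sub_nonneg.2 ht.2) hth
  have hPhi : Real.exp (-(3 / 2)) * phi x * δ ≤ Phi x :=
    calc Real.exp (-(3 / 2)) * phi x * δ
        = Real.exp (-(3 / 2)) * phi x * volume.real (Ioc (x - δ) x) := by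
          rw [Real.volume_real_Ioc_of_le (sub_le_self x hδ₀), sub_sub_cancel]
      _ ≤ ∫ t in Ioc (x - δ) x, phi t :=
          setIntegral_ge_of_const_le_real measurableSet_Ioc measure_Ioc_lt_top.ne hpoint
            integrable_phi.integrableOn
      _ ≤ Phi x :=
          setIntegral_mono_set integrable_phi.integrableOn (.of_forall fun t ↦ (phi_pos t).le)
            Ioc_subset_Iic_self.eventuallyLE
  calc phi x = Real.exp (3 / 2) * (1 + |x|) * (Real.exp (-(3 / 2)) * phi x * δ) := by
        rw [hδ, Real.exp_neg]
        field_simp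
    _ ≤ Real.exp (3 / 2) * (1 + |x|) * Phi x := by gcongr

theorem Phi_pos (x : ℝ) : 0 < Phi x :=
  pos_of_mul_pos_right ((phi_pos x).trans_le (phi_le_mul_Phi x)) (by positivity)

theorem Phi_sub_le {a : ℝ} (ha : 0 ≤ a) (x : ℝ) : Phi (x - a) ≤ Real.exp (a * x) * Phi x := by
  have hshift : Phi (x - a) = ∫ t in Iic x, phi (t - a) := by
    simpa using! ((measurePreserving_sub_right volume a).setIntegral_preimage_emb
      (MeasurableEquiv.subRight a).measurableEmbedding phi (Iic (x - a))).symm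
  rw [hshift, Phi, ← integral_const_mul]
  refine setIntegral_mono_on (integrable_phi.comp_sub_right a).integrableOn
    (integrable_phi.const_mul _).integrableOn measurableSet_Iic fun t ht ↦ ?_
  have htx : a * t - a ^ 2 / 2 ≤ a * x := by nlinarith [mul_le_mul_of_nonneg_left ht.out ha]
  rw [phi_sub, mul_comm]
  gcongr
  exact (phi_pos t).le

section TailAsymptotics

variable {ι : Type*} {l : Filter ι} {c : ι → ℝ}

theorem tendsto_atTop_of_tendsto_Phi_neg (h : Tendsto (fun i ↦ Phi (-(c i))) l (𝓝 0)) :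
    Tendsto c l atTop := by
  refine tendsto_atTop.2 fun M ↦ ?_
  filter_upwards [h.eventually_lt_const (Phi_pos (-M))] with i hi
  exact neg_le_neg_iff.1 (monotone_Phi.reflect_lt hi).le

theorem eventually_le_mul_of_Phi_neg_isBigO {x : ι → ℝ} {r : ℝ} (hc : Tendsto c l atTop)
    (h : (fun i ↦ Phi (-(c i))) =O[l] fun i ↦ Phi (-(x i))) (hr : 1 < r) :
    ∀ᶠ i in l, x i ≤ r * c i := by
  obtain ⟨C, hC₀, hC⟩ := h.exists_pos
  have hr₀ : 0 < r - 1 := sub_pos.2 hr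
  have hdecay : ∀ᶠ i in l, C * Real.exp (-((r - 1) * (c i * c i))) < 1 := by
    have := (Real.tendsto_exp_neg_atTop_nhds_zero.comp
      ((hc.atTop_mul_atTop₀ hc).const_mul_atTop hr₀)).const_mul C
    exact this.eventually_lt_const (by simp)
  filter_upwards [hC.bound, hdecay, hc.eventually_ge_atTop 0] with i hbound hsmall hci
  by_contra! hlt
  rw [Real.norm_of_nonneg (Phi_nonneg _), Real.norm_of_nonneg (Phi_nonneg _)] at hbound
  have hself : Phi (-(c i)) ≤ C * Real.exp (-((r - 1) * (c i * c i))) * Phi (-(c i)) :=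
    calc Phi (-(c i)) ≤ C * Phi (-(x i)) := hbound
      _ ≤ C * Phi (-(c i) - (r - 1) * c i) := by
          gcongr
          exact monotone_Phi (by linarith)
      _ ≤ C * (Real.exp ((r - 1) * c i * -(c i)) * Phi (-(c i))) := by
          gcongr
          exact Phi_sub_le (by positivity) _
      _ = C * Real.exp (-((r - 1) * (c i * c i))) * Phi (-(c i)) := by ring_nf
  exact hself.not_gt (mul_lt_of_lt_one_left (Phi_pos _) hsmall)

theorem exists_eventually_mul_le_neg {ρ : ℝ} {z : ι → ℝ} (hρ : ρ ∈ Ioo (0 : ℝ) 1)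
    (hc : Tendsto c l atTop)
    (h : (fun i ↦ Phi (-(c i))) =O[l] fun i ↦ Phi (-(dd ρ (c i) (z i)))) :
    ∃ κ > 0, ∀ᶠ i in l, κ * c i ≤ -z i := by
  set s := Real.sqrt (1 - ρ)
  have hr : 0 < Real.sqrt ρ := Real.sqrt_pos.2 hρ.1
  have hs₀ : 0 < s := Real.sqrt_pos.2 (sub_pos.2 hρ.2)
  have hs₁ : s < 1 := (Real.sqrt_lt' one_pos).2 (by linarith [hρ.1])
  have hratio : 1 < (1 + s) / (2 * s) := (one_lt_div (by positivity)).2 (by linarith)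
  refine ⟨(1 - s) / 2 / Real.sqrt ρ, by have := sub_pos.2 hs₁; positivity, ?_⟩
  filter_upwards [eventually_le_mul_of_Phi_neg_isBigO hc h hratio] with i hi
  have hlin : c i + Real.sqrt ρ * z i ≤ (1 + s) / 2 * c i := by
    rw [dd, div_le_iff₀ hs₀] at hi
    exact hi.trans_eq (by field_simp)
  rw [div_mul_eq_mul_div, div_le_iff₀ hr]
  linarith

end TailAsymptotics

theorem abs_mul_Phi_pow_mul_phi_le (n : ℕ) (x : ℝ) :
    |(n : ℝ) * (n * Phi (-x) - 1) * Phi x ^ (n - 2) * phi x|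
      ≤ 2 * Real.exp 2 * Real.exp (3 / 2) * (1 + |x|) := by
  have hmills : phi x ≤ Real.exp (3 / 2) * (1 + |x|) * Phi (-x) := by
    simpa only [phi_neg, abs_neg] using phi_le_mul_Phi (-x)
  rw [eq_sub_of_add_eq (Phi_add_Phi_neg x), abs_mul, abs_of_pos (phi_pos x)]
  set b := |(n : ℝ) * (n * Phi (-x) - 1) * (1 - Phi (-x)) ^ (n - 2)|
  calc b * phi x ≤ b * (Real.exp (3 / 2) * (1 + |x|) * Phi (-x)) := by gcongr
    _ = b * Phi (-x) * (Real.exp (3 / 2) * (1 + |x|)) := by ring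
    _ ≤ 2 * Real.exp 2 * (Real.exp (3 / 2) * (1 + |x|)) := by
        gcongr ?_ * _
        exact abs_mul_one_sub_pow_mul_self_le (Phi_mem_Icc _) n
    _ = 2 * Real.exp 2 * Real.exp (3 / 2) * (1 + |x|) := by ring

theorem exists_abs_dd_le (ρ : ℝ) {κ : ℝ} (hκ : 0 < κ) :
    ∃ A ≥ 0, ∀ c z, κ * |c| ≤ |z| → |dd ρ c z| ≤ A * |z| := by
  refine ⟨_, by positivity, fun c z h ↦ le_of_eq_of_le ?_ (abs_mul_add_mul_le
    (Real.sqrt (1 - ρ))⁻¹ (Real.sqrt ρ / Real.sqrt (1 - ρ)) hκ h)⟩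
  rw [dd]
  ring_nf

theorem exists_abs_G_le (ρ : ℝ) {κ : ℝ} (hκ : 0 < κ) :
    ∃ B, ∀ c z, κ * |c| ≤ |z| → |G ρ c z| ≤ B * |z| := by
  set D := 2 * (1 - ρ) ^ ((3 : ℝ) / 2) with hD
  refine ⟨_, fun c z h ↦ le_of_eq_of_le ?_ (abs_mul_add_mul_le
    D⁻¹ (D * Real.sqrt ρ)⁻¹ hκ h)⟩
  rw [G, ← hD]
  ring_nf

theorem exists_abs_case1_integrand_le (ρ : ℝ) {κ : ℝ} (hκ : 0 < κ) :
    ∃ K, ∀ (n : ℕ) (c z : ℝ), κ * |c| ≤ |z| → 1 ≤ |z| →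
      |(n : ℝ) * (n * Phi (-(dd ρ c z)) - 1) * Phi (dd ρ c z) ^ (n - 2) * phi (dd ρ c z) *
        dd ρ c z * G ρ c z ^ 2 * phi z| ≤ K * (z ^ 4 * phi z) := by
  obtain ⟨A, hA, hdd⟩ := exists_abs_dd_le ρ hκ
  obtain ⟨B, hG⟩ := exists_abs_G_le ρ hκ
  set C := 2 * Real.exp 2 * Real.exp (3 / 2)
  refine ⟨C * (1 + A) * A * B ^ 2, fun n c z hcz hz ↦ ?_⟩
  specialize hdd c z hcz
  have hfactor := abs_mul_Phi_pow_mul_phi_le n (dd ρ c z)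
  have hone : 1 + |dd ρ c z| ≤ (1 + A) * |z| := by linarith
  have hphi := (phi_pos z).le
  rw [abs_mul, abs_mul, abs_mul, abs_pow, abs_of_nonneg hphi]
  calc _ ≤ C * ((1 + A) * |z|) * (A * |z|) * (B * |z|) ^ 2 * phi z := by
        gcongr
        · exact hfactor.trans (by gcongr)
        · exact hG c z hcz
    _ = C * (1 + A) * A * B ^ 2 * (|z| ^ 4 * phi z) := by ring
    _ = C * (1 + A) * A * B ^ 2 * (z ^ 4 * phi z) := by rw [Even.pow_abs (by decide)]

theorem integral_case1_tendsto_zero_general {ρ : ℝ} (hρ : ρ ∈ Ioo (0 : ℝ) 1) {αseq : ℕ → ℝ}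
    (hα : αseq =O[atTop] fun n : ℕ ↦ 1 / (n : ℝ))
    {c : ℕ → ℝ} (hc : ∀ n, Phi (-(c n)) = αseq n)
    {z₀ : ℕ → ℝ} (hz₀ : ∀ n : ℕ, 2 ≤ n → Phi (-(dd ρ (c n) (z₀ n))) = 1 / n) :
    Tendsto (fun n : ℕ ↦
        ∫ z in Iic (z₀ n),
          (n : ℝ) * ((n : ℝ) * Phi (-(dd ρ (c n) z)) - 1) *
            (Phi (dd ρ (c n) z)) ^ (n - 2) * phi (dd ρ (c n) z) *
            dd ρ (c n) z * (G ρ (c n) z) ^ 2 * phi z)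
      atTop (𝓝 0) := by
  obtain rfl : (fun n ↦ Phi (-(c n))) = αseq := funext hc
  have hc_top : Tendsto c atTop atTop :=
    tendsto_atTop_of_tendsto_Phi_neg (hα.trans_tendsto tendsto_one_div_atTop_nhds_zero_nat)
  have hα_dd : (fun n ↦ Phi (-(c n))) =O[atTop] fun n ↦ Phi (-(dd ρ (c n) (z₀ n))) :=
    hα.congr' .rfl ((eventually_ge_atTop 2).mono fun n hn ↦ (hz₀ n hn).symm)
  obtain ⟨κ, hκ, hκz⟩ := exists_eventually_mul_le_neg hρ hc_top hα_dd
  have hz_bot : Tendsto z₀ atTop atBot :=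
    tendsto_neg_atTop_iff.1 (tendsto_atTop_mono' _ hκz (hc_top.const_mul_atTop hκ))
  obtain ⟨K, hK⟩ := exists_abs_case1_integrand_le ρ hκ
  refine tendsto_setIntegral_Iic_of_norm_le ((integrable_pow_mul_phi 4).const_mul K) hz_bot ?_
  filter_upwards [hκz, hc_top.eventually_ge_atTop 0, hz_bot.eventually_le_atBot (-1)]
    with n hn hcn hzn z hz
  have hz_abs : |z| = -z := abs_of_nonpos (by linarith)
  exact hK n (c n) z (by rw [abs_of_nonneg hcn]; linarith) (by linarith)

theorem integral_case1_tendsto_zero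
    (ρ : ℝ) (hρ : ρ ∈ Set.Ioo (0:ℝ) 1) (α : ℝ) (hα : α ∈ Set.Ioo (0:ℝ) 1)
    (αseq : ℕ → ℝ) (hαseq : ∀ n, αseq n ∈ Set.Ioo (0:ℝ) 1)
    (hlim : Tendsto (fun n : ℕ => (n : ℝ) * αseq n) atTop (nhds α))
    (c : ℕ → ℝ) (hc : ∀ n, Phi (-(c n)) = αseq n)
    (z₀ : ℕ → ℝ) (hz₀ : ∀ n : ℕ, 2 ≤ n → Phi (-(dd ρ (c n) (z₀ n))) = 1 / n) :
    Tendsto (fun n : ℕ =>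
        ∫ z in Set.Iic (z₀ n),
          (n : ℝ) * ((n : ℝ) * Phi (-(dd ρ (c n) z)) - 1) *
            (Phi (dd ρ (c n) z)) ^ (n - 2) * phi (dd ρ (c n) z) *
            dd ρ (c n) z * (G ρ (c n) z) ^ 2 * phi z)
      atTop (nhds 0) :=
  integral_case1_tendsto_zero_general hρ
    ((isBigO_mul_iff_isBigO_div ((eventually_ne_atTop 0).mono fun _ ↦ Nat.cast_ne_zero.2)).1
      (hlim.isBigO_one ℝ)) hc hz₀
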